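/- Let r > 0 and let f : ℝ^d → ℝ be bounded and continuous. Define the kernel u⁻(y,z) = (|y|^2 - |z|^2)^{α/2} / (|z|^α |z - y|^d) for 0 < |z| < |y|. Then lim_{δ→0+} sup_{y : r-δ < |y| ≤ r} | (∫_{r-δ ≤ |z| ≤ |y|} u⁻(y,z) f(z) dz) / (∫_{r-δ ≤ |z| ≤ |y|} u⁻(y,z) dz) − f(y) | = 0. (This is the analytic content of Lemma 3.1, with the explicit expected-occupation density of the radial minima from Theorem 1.1 substituted for U⁻_y.) -/

import Mathlib

open MeasureTheory Real Set Filter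

/-- The kernel `(|y|² - |z|²)^(α/2) / (|z|^α |z - y|^d)`. -/
noncomputable def radialMinimaKernel {d : ℕ} (α : ℝ) (y z : EuclideanSpace ℝ (Fin d)) : ℝ :=
  (‖y‖ ^ 2 - ‖z‖ ^ 2) ^ (α / 2) / (‖z‖ ^ α * ‖z - y‖ ^ d)

/-- The closed annulus `s ≤ |z| ≤ t`. -/
def closedAnnulus (d : ℕ) (s t : ℝ) : Set (EuclideanSpace ℝ (Fin d)) :=
  {z | s ≤ ‖z‖ ∧ ‖z‖ ≤ t}

/-- A weighted average of `f` is close to `c` if `f` is close to `c` up to an error that is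
controlled after multiplication by the weight. -/
theorem abs_setIntegral_mul_div_sub_le {X : Type*} [MeasurableSpace X] {μ : Measure X}
    {A : Set X} (hA : MeasurableSet A) (hμA : μ A ≠ ⊤) {k f : X → ℝ} {c ε M : ℝ}
    (hk : IntegrableOn k A μ) (hkf : IntegrableOn (fun x => k x * f x) A μ)
    (hk0 : ∀ x ∈ A, 0 ≤ k x) (hpos : 0 < ∫ x in A, k x ∂μ)
    (hb : ∀ x ∈ A, k x * |f x - c| ≤ ε * k x + M) :
    |(∫ x in A, k x * f x ∂μ) / (∫ x in A, k x ∂μ) - c| ≤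
      ε + M * μ.real A / ∫ x in A, k x ∂μ := by
  have hconst : IntegrableOn (fun _ : X => M) A μ := integrableOn_const hμA
  have hdiff : (∫ x in A, k x * f x ∂μ) - c * ∫ x in A, k x ∂μ =
      ∫ x in A, k x * (f x - c) ∂μ := by
    rw [← integral_const_mul, ← integral_sub hkf (hk.const_mul c)]
    simp only [mul_sub, mul_comm c]
  have hbound : |∫ x in A, k x * (f x - c) ∂μ| ≤ ε * (∫ x in A, k x ∂μ) + M * μ.real A := by
    calc |∫ x in A, k x * (f x - c) ∂μ| ≤ ∫ x in A, (ε * k x + M) ∂μ := by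
          rw [← Real.norm_eq_abs]
          refine norm_integral_le_of_norm_le ((hk.const_mul ε).add hconst) ?_
          refine (ae_restrict_iff' hA).2 (Eventually.of_forall fun x hx => ?_)
          rw [norm_mul, Real.norm_eq_abs, Real.norm_eq_abs, abs_of_nonneg (hk0 x hx)]
          exact hb x hx
      _ = ε * (∫ x in A, k x ∂μ) + M * μ.real A := by
          rw [integral_add (hk.const_mul ε) hconst, integral_const_mul, setIntegral_const,
            smul_eq_mul, mul_comm M]
  rw [div_sub' hpos.ne', mul_comm _ c, hdiff, abs_div, abs_of_pos hpos, div_le_iff₀ hpos, add_mul,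
    div_mul_cancel₀ _ hpos.ne']
  exact hbound

theorem measurableSet_closedAnnulus (d : ℕ) (s t : ℝ) : MeasurableSet (closedAnnulus d s t) :=
  (measurableSet_le measurable_const measurable_norm).inter
    (measurableSet_le measurable_norm measurable_const)

theorem volume_closedAnnulus_ne_top (d : ℕ) (s t : ℝ) : volume (closedAnnulus d s t) ≠ ⊤ := by
  have hsub : closedAnnulus d s t ⊆ Metric.closedBall 0 t := fun z hz =>
    mem_closedBall_zero_iff.2 hz.2
  exact ((measure_mono hsub).trans_lt measure_closedBall_lt_top).ne

theorem volume_real_ball_eq {d : ℕ} (x : EuclideanSpace ℝ (Fin d)) {t : ℝ} (ht : 0 < t) :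
    volume.real (Metric.ball x t) =
      t ^ d * volume.real (Metric.ball (0 : EuclideanSpace ℝ (Fin d)) 1) := by
  rw [measureReal_def, Measure.addHaar_ball_of_pos _ _ ht, ENNReal.toReal_mul,
    ENNReal.toReal_ofReal (by positivity), finrank_euclideanSpace_fin, measureReal_def]

theorem volume_real_closedAnnulus_le {d : ℕ} {s t : ℝ} (hs : 0 < s) (hst : s ≤ t) :
    volume.real (closedAnnulus d s t) ≤
      (t ^ d - s ^ d) * volume.real (Metric.ball (0 : EuclideanSpace ℝ (Fin d)) 1) := by
  have hsub : closedAnnulus d s t ⊆ Metric.closedBall 0 t \ Metric.ball 0 s := fun z hz =>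
    ⟨mem_closedBall_zero_iff.2 hz.2, fun h => (mem_ball_zero_iff.1 h).not_ge hz.1⟩
  have hball : Metric.ball (0 : EuclideanSpace ℝ (Fin d)) s ⊆ Metric.closedBall 0 t :=
    (Metric.ball_subset_ball hst).trans Metric.ball_subset_closedBall
  refine (measureReal_mono hsub
    ((measure_mono sdiff_subset).trans_lt measure_closedBall_lt_top).ne).trans_eq ?_
  rw [measureReal_sdiff hball measurableSet_ball measure_closedBall_lt_top.ne,
    Measure.addHaar_real_closedBall _ _ (hs.le.trans hst), volume_real_ball_eq _ hs,
    finrank_euclideanSpace_fin, sub_mul]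

theorem measurable_radialMinimaKernel {d : ℕ} (α : ℝ) (y : EuclideanSpace ℝ (Fin d)) :
    Measurable (radialMinimaKernel α y) := by
  unfold radialMinimaKernel
  fun_prop

theorem radialMinimaKernel_nonneg {d : ℕ} {α : ℝ} {y z : EuclideanSpace ℝ (Fin d)}
    (hz : ‖z‖ ≤ ‖y‖) : 0 ≤ radialMinimaKernel α y z := by
  have : 0 ≤ ‖y‖ ^ 2 - ‖z‖ ^ 2 := sub_nonneg.2 (by gcongr)
  unfold radialMinimaKernel
  positivity

/-- An upper bound for the kernel in terms of bounds on the radial gap, the modulus of `z`, and the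
distance from `z` to `y`. -/
theorem radialMinimaKernel_le {d : ℕ} {α r s h η : ℝ} (hα : 0 < α) (hs : 0 < s) (hη : 0 < η)
    {y z : EuclideanSpace ℝ (Fin d)} (hyr : ‖y‖ ≤ r) (hz : ‖z‖ ≤ ‖y‖) (hsz : s ≤ ‖z‖)
    (hgap : ‖y‖ - ‖z‖ ≤ h) (hdist : η ≤ ‖z - y‖) :
    radialMinimaKernel α y z ≤ (2 * r * h) ^ (α / 2) / (s ^ α * η ^ d) := by
  have h0 : 0 ≤ ‖y‖ ^ 2 - ‖z‖ ^ 2 := sub_nonneg.2 (by gcongr)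
  have h1 : ‖y‖ ^ 2 - ‖z‖ ^ 2 ≤ 2 * r * h := by
    nlinarith [norm_nonneg y, norm_nonneg z]
  have h2 : 0 ≤ (2 * r * h) ^ (α / 2) := rpow_nonneg (h0.trans h1) _
  unfold radialMinimaKernel
  gcongr

/-- A lower bound for the kernel in terms of bounds on the radial gap and the distance from `z`
to `y`. -/
theorem le_radialMinimaKernel {d : ℕ} {α r a h : ℝ} (hα : 0 < α)
    {y z : EuclideanSpace ℝ (Fin d)} (hyr : ‖y‖ ≤ r) (hz0 : 0 < ‖z‖) (ha : 0 < a)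
    (hgap : a ≤ ‖y‖ - ‖z‖) (hdist : ‖z - y‖ ≤ h) :
    (‖y‖ * a) ^ (α / 2) / (r ^ α * h ^ d) ≤ radialMinimaKernel α y z := by
  have hzy : 0 < ‖z - y‖ := by
    rw [norm_pos_iff, sub_ne_zero]
    rintro rfl
    linarith
  have h1 : ‖y‖ * a ≤ ‖y‖ ^ 2 - ‖z‖ ^ 2 := by
    nlinarith [norm_nonneg y]
  have h2 : 0 ≤ (‖y‖ ^ 2 - ‖z‖ ^ 2) ^ (α / 2) := rpow_nonneg (h1.trans' (by positivity)) _
  have hr : ‖z‖ ≤ r := by linarith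
  have hr0 : 0 ≤ r ^ α := rpow_nonneg (hz0.le.trans hr) _
  unfold radialMinimaKernel
  gcongr

theorem integrableOn_radialMinimaKernel {d : ℕ} (hd : 1 ≤ d) {α s : ℝ} (hα : 0 < α) (hs : 0 < s)
    (y : EuclideanSpace ℝ (Fin d)) :
    IntegrableOn (radialMinimaKernel α y) (closedAnnulus d s ‖y‖) := by
  set β : ℝ := d - α / 2 with hβ
  set C : ℝ := (2 * ‖y‖) ^ (α / 2) / s ^ α with hC
  have hloc : LocallyIntegrable (fun x : EuclideanSpace ℝ (Fin d) => C * ‖x‖ ^ (-β)) := by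
    refine locallyIntegrable_of_norm_le_rpow (C := C) (α := β) (by simpa using hd)
      (by simp [hβ, hα]) (Eventually.of_forall fun x => ?_)
      ((measurable_norm.pow_const _).const_mul C).aestronglyMeasurable
    rw [Real.norm_of_nonneg (by positivity)]
  have hball := ((hloc.integrableOn_isCompact
    (isCompact_closedBall (0 : EuclideanSpace ℝ (Fin d)) (2 * ‖y‖))).integrable_indicator
      measurableSet_closedBall).comp_sub_right y
  rw [← integrable_indicator_iff (measurableSet_closedAnnulus d s _)]
  refine hball.mono' ((measurable_radialMinimaKernel α y).indicator
    (measurableSet_closedAnnulus d s _)).aestronglyMeasurable (Eventually.of_forall fun z => ?_)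
  by_cases hz : z ∈ closedAnnulus d s ‖y‖
  · have hmem : z - y ∈ Metric.closedBall (0 : EuclideanSpace ℝ (Fin d)) (2 * ‖y‖) := by
      rw [mem_closedBall_zero_iff]
      linarith [norm_sub_le z y, hz.2]
    rw [indicator_of_mem hz, indicator_of_mem hmem,
      Real.norm_of_nonneg (radialMinimaKernel_nonneg hz.2)]
    rcases eq_or_ne z y with rfl | hne
    · have : radialMinimaKernel α z z = 0 := by
        simp [radialMinimaKernel, (show α / 2 ≠ 0 by positivity)]
      rw [this]
      positivity
    · have hpos : 0 < ‖z - y‖ := norm_pos_iff.2 (sub_ne_zero.2 hne)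
      refine (radialMinimaKernel_le hα hs hpos le_rfl hz.2 hz.1
        (h := ‖z - y‖) (by linarith [norm_sub_norm_le y z, norm_sub_rev y z]) le_rfl).trans_eq ?_
      rw [hC, hβ, neg_sub, rpow_sub hpos, rpow_natCast,
        mul_rpow (by positivity) hpos.le]
      field_simp
  · rw [indicator_of_notMem hz, norm_zero]
    exact indicator_nonneg (fun x _ => by positivity) _

/-- A ball of radius `h / 4` inside the annulus of thickness `h` yields a lower bound of order
`h ^ (α / 2)` for the total mass of the kernel. -/
theorem le_setIntegral_radialMinimaKernel {d : ℕ} (hd : 1 ≤ d) {α r s : ℝ} (hα : 0 < α)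
    (hr : 0 < r) (hs : r / 2 ≤ s) {y : EuclideanSpace ℝ (Fin d)} (hsy : s < ‖y‖) (hyr : ‖y‖ ≤ r) :
    (r / 8) ^ (α / 2) / (r ^ α * 4 ^ d) *
        volume.real (Metric.ball (0 : EuclideanSpace ℝ (Fin d)) 1) * (‖y‖ - s) ^ (α / 2) ≤
      ∫ z in closedAnnulus d s ‖y‖, radialMinimaKernel α y z := by
  have hs0 : 0 < s := by linarith
  have hy0 : 0 < ‖y‖ := by linarith
  obtain ⟨h, hh⟩ : ∃ h, h = ‖y‖ - s := ⟨_, rfl⟩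
  have h0 : 0 < h := by linarith
  set w : EuclideanSpace ℝ (Fin d) := (1 - h / (2 * ‖y‖)) • y with hw
  have hfrac : h / (2 * ‖y‖) * ‖y‖ = h / 2 := by field_simp
  have hwnorm : ‖w‖ = ‖y‖ - h / 2 := by
    have : 0 ≤ 1 - h / (2 * ‖y‖) := by
      rw [sub_nonneg, div_le_one (by positivity)]
      linarith
    rw [hw, norm_smul, Real.norm_of_nonneg this, sub_mul, one_mul, hfrac]
  have hwy : ‖w - y‖ = h / 2 := by
    have : w - y = (-(h / (2 * ‖y‖))) • y := by rw [hw]; module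
    rw [this, norm_smul, norm_neg, Real.norm_of_nonneg (by positivity), hfrac]
  have hball : ∀ z ∈ Metric.ball w (h / 4),
      s ≤ ‖z‖ ∧ h / 4 ≤ ‖y‖ - ‖z‖ ∧ ‖z - y‖ ≤ h := by
    intro z hz
    rw [mem_ball_iff_norm] at hz
    have e1 := norm_sub_norm_le z w
    have e2 := norm_sub_norm_le w z
    rw [norm_sub_rev] at e2
    have e3 := norm_sub_le_norm_sub_add_norm_sub z w y
    exact ⟨by linarith, by linarith, by linarith⟩
  have hsub : Metric.ball w (h / 4) ⊆ closedAnnulus d s ‖y‖ := fun z hz =>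
    ⟨(hball z hz).1, by linarith [(hball z hz).2.1]⟩
  have hint := integrableOn_radialMinimaKernel hd hα hs0 y
  have hlow := setIntegral_ge_of_const_le_real (μ := volume) measurableSet_ball
    measure_ball_lt_top.ne (c := (r / 8 * h) ^ (α / 2) / (r ^ α * h ^ d))
    (f := radialMinimaKernel α y) (s := Metric.ball w (h / 4)) (fun z hz => by
      obtain ⟨hz1, hz2, hz3⟩ := hball z hz
      refine le_trans ?_ (le_radialMinimaKernel hα hyr (hs0.trans_le hz1) (by positivity) hz2 hz3)
      have : r / 8 * h ≤ ‖y‖ * (h / 4) := by nlinarith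
      gcongr) (hint.mono_set hsub)
  refine le_trans (le_of_eq ?_) (hlow.trans (setIntegral_mono_set hint
    ((ae_restrict_iff' (measurableSet_closedAnnulus d s _)).2
      (Eventually.of_forall fun z hz => radialMinimaKernel_nonneg hz.2)) hsub.eventuallyLE))
  rw [← hh, volume_real_ball_eq w (by positivity), mul_rpow (by positivity) h0.le, div_pow]
  field_simp

/-- The average of `f` against the kernel over a thin annulus differs from `f y` by at most the
local oscillation of `f` plus a multiple of the volume of the annulus. -/
theorem abs_radialMinimaKernel_average_sub_le {d : ℕ} (hd : 1 ≤ d) {α r s ε η C : ℝ} (hα : 0 < α)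
    (hr : 0 < r) (hs : r / 2 ≤ s) (hη : 0 < η) (hε : 0 ≤ ε)
    {f : EuclideanSpace ℝ (Fin d) → ℝ} (hf : Continuous f) (hfb : ∀ x, |f x| ≤ C)
    {y : EuclideanSpace ℝ (Fin d)} (hsy : s < ‖y‖) (hyr : ‖y‖ ≤ r)
    (hosc : ∀ z, ‖z‖ ≤ r → ‖z - y‖ < η → |f z - f y| ≤ ε) :
    |(∫ z in closedAnnulus d s ‖y‖, radialMinimaKernel α y z * f z) /
        (∫ z in closedAnnulus d s ‖y‖, radialMinimaKernel α y z) - f y| ≤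
      ε + 2 * C * ((2 * r) ^ (α / 2) / ((r / 2) ^ α * η ^ d)) /
        ((r / 8) ^ (α / 2) / (r ^ α * 4 ^ d)) * (r ^ d - s ^ d) := by
  have hs0 : 0 < s := by linarith
  have h0 : 0 < ‖y‖ - s := by linarith
  have hC : 0 ≤ C := (abs_nonneg _).trans (hfb 0)
  set ω : ℝ := volume.real (Metric.ball (0 : EuclideanSpace ℝ (Fin d)) 1) with hω
  have hω0 : 0 < ω :=
    ENNReal.toReal_pos (Metric.measure_ball_pos _ _ one_pos).ne' measure_ball_lt_top.ne
  set c : ℝ := (r / 8) ^ (α / 2) / (r ^ α * 4 ^ d) with hc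
  have hc0 : 0 < c := by positivity
  set D : ℝ := (2 * r) ^ (α / 2) / ((r / 2) ^ α * η ^ d) with hD
  have hD0 : 0 < D := by positivity
  set p : ℝ := (‖y‖ - s) ^ (α / 2) with hp
  have hp0 : 0 < p := by positivity
  have hint := integrableOn_radialMinimaKernel hd hα hs0 y
  have hmass : c * ω * p ≤ ∫ z in closedAnnulus d s ‖y‖, radialMinimaKernel α y z :=
    le_setIntegral_radialMinimaKernel hd hα hr hs hsy hyr
  have hvol : volume.real (closedAnnulus d s ‖y‖) ≤ (r ^ d - s ^ d) * ω := by
    refine (volume_real_closedAnnulus_le hs0 hsy.le).trans ?_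
    gcongr
  have hV0 : 0 ≤ r ^ d - s ^ d := sub_nonneg.2 (pow_le_pow_left₀ hs0.le (by linarith) d)
  have hpos : 0 < ∫ z in closedAnnulus d s ‖y‖, radialMinimaKernel α y z :=
    lt_of_lt_of_le (by positivity) hmass
  refine (abs_setIntegral_mul_div_sub_le (M := 2 * C * (D * p)) (ε := ε)
    (measurableSet_closedAnnulus d s _) (volume_closedAnnulus_ne_top d s _) hint
    (hint.mul_bdd hf.aestronglyMeasurable (Eventually.of_forall hfb))
    (fun z hz => radialMinimaKernel_nonneg hz.2) hpos fun z hz => ?_).trans ?_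
  · have hk0 := radialMinimaKernel_nonneg (α := α) hz.2
    rcases lt_or_ge ‖z - y‖ η with hzy | hzy
    · have := hosc z (hz.2.trans hyr) hzy
      calc radialMinimaKernel α y z * |f z - f y| ≤ radialMinimaKernel α y z * ε := by gcongr
        _ ≤ ε * radialMinimaKernel α y z + 2 * C * (D * p) := by
          rw [mul_comm ε]
          exact le_add_of_nonneg_right (by positivity)
    · have hk : radialMinimaKernel α y z ≤ D * p := by
        refine (radialMinimaKernel_le hα (half_pos hr) hη hyr hz.2 (hs.trans hz.1)
          (h := ‖y‖ - s) (by linarith [hz.1]) hzy).trans_eq ?_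
        rw [mul_rpow (by positivity) h0.le]
        ring
      have hdiff : |f z - f y| ≤ 2 * C := by
        linarith [abs_sub (f z) (f y), hfb z, hfb y]
      calc radialMinimaKernel α y z * |f z - f y| ≤ D * p * (2 * C) := by gcongr
        _ ≤ ε * radialMinimaKernel α y z + 2 * C * (D * p) := by
          rw [mul_comm (D * p)]
          exact le_add_of_nonneg_left (by positivity)
  · gcongr ε + ?_
    calc 2 * C * (D * p) * volume.real (closedAnnulus d s ‖y‖) /
          (∫ z in closedAnnulus d s ‖y‖, radialMinimaKernel α y z)
        ≤ 2 * C * (D * p) * ((r ^ d - s ^ d) * ω) / (c * ω * p) := by gcongr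
      _ = 2 * C * D / c * (r ^ d - s ^ d) := by field_simp

theorem closest_reach_kernel_uniform_approx
    (d : ℕ) (hd : 2 ≤ d) (α : ℝ) (hα0 : 0 < α) (hα2 : α < 2)
    (r : ℝ) (hr : 0 < r)
    (f : EuclideanSpace ℝ (Fin d) → ℝ) (hf : Continuous f)
    (hfb : ∃ C, ∀ y, |f y| ≤ C) :
    Tendsto (fun δ : ℝ =>
        ⨆ y : {y : EuclideanSpace ℝ (Fin d) // r - δ < ‖y‖ ∧ ‖y‖ ≤ r},
          |(∫ z in {z : EuclideanSpace ℝ (Fin d) | r - δ ≤ ‖z‖ ∧ ‖z‖ ≤ ‖(y : EuclideanSpace ℝ (Fin d))‖},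
                ((‖(y : EuclideanSpace ℝ (Fin d))‖ ^ 2 - ‖z‖ ^ 2) ^ (α / 2) /
                  (‖z‖ ^ α * ‖z - (y : EuclideanSpace ℝ (Fin d))‖ ^ d)) * f z) /
              (∫ z in {z : EuclideanSpace ℝ (Fin d) | r - δ ≤ ‖z‖ ∧ ‖z‖ ≤ ‖(y : EuclideanSpace ℝ (Fin d))‖},
                (‖(y : EuclideanSpace ℝ (Fin d))‖ ^ 2 - ‖z‖ ^ 2) ^ (α / 2) /
                  (‖z‖ ^ α * ‖z - (y : EuclideanSpace ℝ (Fin d))‖ ^ d))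
            - f (y : EuclideanSpace ℝ (Fin d))|)
      (nhdsWithin 0 (Ioi 0)) (nhds 0) := by
  obtain ⟨C, hC⟩ := hfb
  rw [Metric.tendsto_nhds]
  intro ε hε
  obtain ⟨η, hη, huc⟩ := Metric.uniformContinuousOn_iff.1
    ((isCompact_closedBall (0 : EuclideanSpace ℝ (Fin d)) r).uniformContinuousOn_of_continuous
      hf.continuousOn) (ε / 2) (half_pos hε)
  set L : ℝ := 2 * C * ((2 * r) ^ (α / 2) / ((r / 2) ^ α * η ^ d)) /
    ((r / 8) ^ (α / 2) / (r ^ α * 4 ^ d)) with hL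
  have hlim : Tendsto (fun δ : ℝ => ε / 2 + L * (r ^ d - (r - δ) ^ d)) (nhdsWithin 0 (Ioi 0))
      (nhds (ε / 2)) := by
    have hcont : Continuous fun δ : ℝ => ε / 2 + L * (r ^ d - (r - δ) ^ d) := by fun_prop
    simpa using (hcont.tendsto 0).mono_left nhdsWithin_le_nhds
  filter_upwards [hlim.eventually_lt_const (half_lt_self hε),
    Ioc_mem_nhdsGT (half_pos hr)] with δ hδ hδr
  rw [Real.dist_0_eq_abs, abs_of_nonneg (Real.iSup_nonneg fun _ => abs_nonneg _)]
  have hC0 : 0 ≤ C := (abs_nonneg _).trans (hC 0)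
  have hpow : (r - δ) ^ d ≤ r ^ d :=
    pow_le_pow_left₀ (by linarith [hδr.2]) (by linarith [hδr.1]) d
  have hbound0 : 0 ≤ ε / 2 + L * (r ^ d - (r - δ) ^ d) :=
    add_nonneg (half_pos hε).le (mul_nonneg (by positivity) (sub_nonneg.2 hpow))
  refine (Real.iSup_le (fun y => ?_) hbound0).trans_lt hδ
  obtain ⟨y, hy1, hy2⟩ := y
  refine abs_radialMinimaKernel_average_sub_le (by omega) hα0 hr (by linarith [hδr.2]) hη
    (half_pos hε).le hf hC hy1 hy2 fun z hz hzy => ?_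
  exact (huc z (mem_closedBall_zero_iff.2 hz) y (mem_closedBall_zero_iff.2 hy2)
    (by rwa [dist_eq_norm])).le
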